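/- Let P0 ⊆ Δ_{k-1} be closed with ∅ ≠ P0 ≠ Δ_{k-1} and PA = Δ_{k-1} \ P0. There exists an SUB test of P0 against PA of sample size n if and only if there exists a real polynomial β̃ in k variables of total degree at most n, not constant on Δ_{k-1}, such that P0 = {π ∈ Δ_{k-1} : β̃(π) ≤ 0} and PA = {π ∈ Δ_{k-1} : β̃(π) > 0}. -/

import Mathlib

open Finset

/-- The probability simplex on a finite index set `ι`. -/
def probSimplex (ι : Type) [Fintype ι] : Set (ι → ℝ) :=
  {π | (∀ i, 0 ≤ π i) ∧ ∑ i, π i = 1}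

/-- Count vectors of sample size `n`: functions `x : ι → ℕ` with `∑ i, x i = n`. -/
def countVecs (ι : Type) [Fintype ι] [DecidableEq ι] (n : ℕ) : Finset (ι → ℕ) :=
  (Fintype.piFinset fun _ : ι => Finset.range (n + 1)).filter fun x => ∑ i, x i = n

/-- A (randomized) test of sample size `n`: values in `[0,1]` on all count vectors. -/
def IsTest (ι : Type) [Fintype ι] [DecidableEq ι] (n : ℕ) (φ : (ι → ℕ) → ℝ) : Prop :=
  ∀ x ∈ countVecs ι n, 0 ≤ φ x ∧ φ x ≤ 1

/-- The power function of a test. -/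
noncomputable def powerFn (ι : Type) [Fintype ι] [DecidableEq ι] (n : ℕ)
    (φ : (ι → ℕ) → ℝ) (π : ι → ℝ) : ℝ :=
  ∑ x ∈ countVecs ι n, φ x * (Nat.multinomial Finset.univ x : ℝ) * ∏ i, π i ^ x i

/-- Unbiasedness relative to the null hypothesis `P0`. -/
def Unbiased (ι : Type) [Fintype ι] [DecidableEq ι] (n : ℕ) (P0 : Set (ι → ℝ))
    (φ : (ι → ℕ) → ℝ) : Prop :=
  ∀ π0 ∈ P0, ∀ πA ∈ probSimplex ι \ P0, powerFn ι n φ π0 ≤ powerFn ι n φ πA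

/-- Non-trivial unbiased test: unbiased with non-constant power on the simplex. -/
def IsNTUB (ι : Type) [Fintype ι] [DecidableEq ι] (n : ℕ) (P0 : Set (ι → ℝ))
    (φ : (ι → ℕ) → ℝ) : Prop :=
  Unbiased ι n P0 φ ∧
    ∃ π ∈ probSimplex ι, ∃ π' ∈ probSimplex ι, powerFn ι n φ π ≠ powerFn ι n φ π'

/-- Strictly unbiased test. -/
def IsSUB (ι : Type) [Fintype ι] [DecidableEq ι] (n : ℕ) (P0 : Set (ι → ℝ))
    (φ : (ι → ℕ) → ℝ) : Prop :=
  ∀ π0 ∈ P0, ∀ πA ∈ probSimplex ι \ P0, powerFn ι n φ π0 < powerFn ι n φ πA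

/-- Level-`α` test. -/
def IsLevel (ι : Type) [Fintype ι] [DecidableEq ι] (n : ℕ) (P0 : Set (ι → ℝ)) (α : ℝ)
    (φ : (ι → ℕ) → ℝ) : Prop :=
  ∀ π ∈ P0, powerFn ι n φ π ≤ α

/-- A test has size `α` if the supremum of its power over `P0` is `α`. -/
def HasSize (ι : Type) [Fintype ι] [DecidableEq ι] (n : ℕ) (P0 : Set (ι → ℝ)) (α : ℝ)
    (φ : (ι → ℕ) → ℝ) : Prop :=
  IsLUB (powerFn ι n φ '' P0) α

/-- Uniformly most powerful unbiased level-`α` test. -/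
def IsUMPU (ι : Type) [Fintype ι] [DecidableEq ι] (n : ℕ) (P0 : Set (ι → ℝ)) (α : ℝ)
    (φ : (ι → ℕ) → ℝ) : Prop :=
  IsLevel ι n P0 α φ ∧ Unbiased ι n P0 φ ∧
    ∀ ψ, IsTest ι n ψ → IsLevel ι n P0 α ψ → Unbiased ι n P0 ψ →
      ∀ πA ∈ probSimplex ι \ P0, powerFn ι n ψ πA ≤ powerFn ι n φ πA

/-!
On the simplex the coordinates sum to one, so multiplying the degree-`d` part of a polynomial of
degree at most `n` by `(∑ i, X i) ^ (n - d)` makes it homogeneous of degree `n` without changing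
its values there. A homogeneous polynomial of degree `n` is `∑ x, c x * multinomial x * π ^ x`, the
power function of a `c` with values in `ℝ` instead of `[0, 1]`. As the multinomial weights sum to
one on the simplex, replacing `c` by `a * c + b` replaces the power by `a * power + b`, and
suitable `a > 0` and `b` bring `c` into `[0, 1]`; this turns a polynomial into a test. Conversely,
the power of a strictly unbiased test is a polynomial, and subtracting its maximum over the compact
set `P0` moves the threshold between `P0` and its complement to zero.
-/

section Homogenization

variable {σ R : Type*} [CommSemiring R]

/-- The degree-`n` homogenization of `p` with respect to a linear form `ℓ`: each homogeneous
component of degree at most `n` is raised to degree `n` by a power of `ℓ`, which keeps its values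
where `ℓ = 1`. Components of degree above `n` are discarded. -/
noncomputable def homogenizeBy (ℓ : MvPolynomial σ R) (n : ℕ) (p : MvPolynomial σ R) :
    MvPolynomial σ R :=
  ∑ d ∈ range (n + 1), MvPolynomial.homogeneousComponent d p * ℓ ^ (n - d)

lemma isHomogeneous_homogenizeBy {ℓ : MvPolynomial σ R} (hℓ : ℓ.IsHomogeneous 1) (n : ℕ)
    (p : MvPolynomial σ R) : (homogenizeBy ℓ n p).IsHomogeneous n := by
  refine MvPolynomial.IsHomogeneous.sum _ _ _ fun d hd => ?_
  have hdeg : d + 1 * (n - d) = n := by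
    have := mem_range_succ_iff.mp hd
    omega
  simpa only [hdeg] using
    (MvPolynomial.homogeneousComponent_isHomogeneous d p).mul (hℓ.pow (n - d))

lemma sum_homogeneousComponent_of_totalDegree_le {p : MvPolynomial σ R} {n : ℕ}
    (hp : p.totalDegree ≤ n) :
    ∑ d ∈ range (n + 1), MvPolynomial.homogeneousComponent d p = p := by
  conv_rhs => rw [← MvPolynomial.sum_homogeneousComponent p]
  refine (sum_subset (range_mono (by omega)) fun d _ hd => ?_).symm
  exact MvPolynomial.homogeneousComponent_eq_zero d p (by simpa using hd)

lemma eval_homogenizeBy {ℓ p : MvPolynomial σ R} {n : ℕ} (hp : p.totalDegree ≤ n) {π : σ → R}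
    (hπ : MvPolynomial.eval π ℓ = 1) :
    MvPolynomial.eval π (homogenizeBy ℓ n p) = MvPolynomial.eval π p := by
  conv_rhs => rw [← sum_homogeneousComponent_of_totalDegree_le hp]
  simp [homogenizeBy, hπ]

end Homogenization

lemma exists_forall_mem_iff_le_of_forall_lt {X α : Type*} [TopologicalSpace X] [LinearOrder α]
    [TopologicalSpace α] [ClosedIciTopology α] {K S : Set X} {f : X → α} (hK : IsCompact K)
    (hne : K.Nonempty) (hf : ContinuousOn f K) (hlt : ∀ x ∈ K, ∀ y ∈ S \ K, f x < f y) :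
    ∃ t, ∀ x ∈ S, x ∈ K ↔ f x ≤ t := by
  obtain ⟨x₀, hx₀, hmax⟩ := hK.exists_isMaxOn hne hf
  refine ⟨f x₀, fun x hx => ⟨fun hxK => hmax hxK, fun hle => ?_⟩⟩
  by_contra hxK
  exact (hlt x₀ hx₀ x ⟨hx, hxK⟩).not_ge hle

lemma eq_sep_nonpos_and_sdiff_eq_sep_pos_iff {X α : Type*} [LinearOrder α] [Zero α]
    {P S : Set X} (hPS : P ⊆ S) {f : X → α} :
    P = {x ∈ S | f x ≤ 0} ∧ S \ P = {x ∈ S | 0 < f x} ↔ ∀ x ∈ S, x ∈ P ↔ f x ≤ 0 := by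
  refine ⟨fun ⟨hP, _⟩ x hx => ?_, fun h => ⟨?_, ?_⟩⟩
  · rw [hP]
    exact and_iff_right hx
  · ext x
    exact ⟨fun hx => ⟨hPS hx, (h x (hPS hx)).mp hx⟩, fun hx => (h x hx.1).mpr hx.2⟩
  · ext x
    exact and_congr_right fun hx => (not_congr (h x hx)).trans not_le

section PowerFunction

variable {ι : Type} [Fintype ι]

lemma isCompact_probSimplex : IsCompact (probSimplex ι) :=
  isCompact_stdSimplex ℝ ι

/-- The coefficients of a homogeneous polynomial in the Bernstein basis
`multinomial x * π ^ x`; they are the values of `φ` that make it a power function. -/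
noncomputable def bernsteinCoeff (p : MvPolynomial ι ℝ) (x : ι → ℕ) : ℝ :=
  p.coeff (Finsupp.equivFunOnFinite.symm x) / Nat.multinomial univ x

lemma bernsteinCoeff_mul_multinomial (p : MvPolynomial ι ℝ) (x : ι → ℕ) :
    bernsteinCoeff p x * Nat.multinomial univ x = p.coeff (Finsupp.equivFunOnFinite.symm x) :=
  div_mul_cancel₀ _ (Nat.cast_ne_zero.mpr (Nat.multinomial_pos _ _).ne')

variable [DecidableEq ι] {n : ℕ}

lemma countVecs_eq_piAntidiag : countVecs ι n = univ.piAntidiag n := by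
  ext x
  have hle : ∑ i, x i = n → ∀ i, x i < n + 1 := fun hsum i =>
    Nat.lt_succ_of_le (hsum ▸ single_le_sum_of_canonicallyOrdered (mem_univ i))
  simpa [countVecs] using hle

lemma mem_countVecs {x : ι → ℕ} : x ∈ countVecs ι n ↔ ∑ i, x i = n := by
  simp [countVecs_eq_piAntidiag]

lemma sum_multinomial_mul_prod_pow_eq_one {π : ι → ℝ} (hπ : ∑ i, π i = 1) :
    ∑ x ∈ countVecs ι n, (Nat.multinomial univ x : ℝ) * ∏ i, π i ^ x i = 1 := by
  rw [countVecs_eq_piAntidiag, ← sum_pow_eq_sum_piAntidiag, hπ, one_pow]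

lemma powerFn_mul_add (c : (ι → ℕ) → ℝ) (a b : ℝ) {π : ι → ℝ} (hπ : ∑ i, π i = 1) :
    powerFn ι n (fun x => a * c x + b) π = a * powerFn ι n c π + b := by
  calc powerFn ι n (fun x => a * c x + b) π
      = a * powerFn ι n c π +
          b * ∑ x ∈ countVecs ι n, (Nat.multinomial univ x : ℝ) * ∏ i, π i ^ x i := by
        simp only [powerFn, mul_sum, ← sum_add_distrib]
        exact sum_congr rfl fun x _ => by ring
    _ = a * powerFn ι n c π + b := by
        rw [sum_multinomial_mul_prod_pow_eq_one hπ, mul_one]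

/-- The power function of `φ` as a polynomial in the cell probabilities. -/
noncomputable def powerPoly (n : ℕ) (φ : (ι → ℕ) → ℝ) : MvPolynomial ι ℝ :=
  ∑ x ∈ countVecs ι n,
    MvPolynomial.monomial (Finsupp.equivFunOnFinite.symm x) (φ x * (Nat.multinomial univ x : ℝ))

lemma eval_powerPoly (φ : (ι → ℕ) → ℝ) (π : ι → ℝ) :
    MvPolynomial.eval π (powerPoly n φ) = powerFn ι n φ π := by
  simp [powerPoly, powerFn, MvPolynomial.eval_monomial, Finsupp.prod_fintype]

lemma isHomogeneous_powerPoly (φ : (ι → ℕ) → ℝ) : (powerPoly n φ).IsHomogeneous n := by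
  refine MvPolynomial.IsHomogeneous.sum _ _ _ fun x hx => ?_
  refine MvPolynomial.isHomogeneous_monomial _ ?_
  simpa [Finsupp.degree_eq_sum] using mem_countVecs.mp hx

lemma powerPoly_bernsteinCoeff {p : MvPolynomial ι ℝ} (hp : p.IsHomogeneous n) :
    powerPoly n (bernsteinCoeff p) = p := by
  ext d
  have hmem : ⇑d ∈ countVecs ι n ↔ d.degree = n := by
    rw [mem_countVecs, Finsupp.degree_eq_sum]
  simp only [powerPoly, bernsteinCoeff_mul_multinomial, MvPolynomial.coeff_sum,
    MvPolynomial.coeff_monomial, Equiv.symm_apply_eq, sum_ite_eq', Equiv.symm_apply_apply]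
  exact ite_eq_left_iff.mpr fun hd => (hp.coeff_eq_zero (mt hmem.mpr hd)).symm

lemma exists_powerFn_eq_eval {β : MvPolynomial ι ℝ} (hβ : β.totalDegree ≤ n) :
    ∃ c : (ι → ℕ) → ℝ, ∀ π : ι → ℝ, ∑ i, π i = 1 →
      powerFn ι n c π = MvPolynomial.eval π β := by
  have hsum : (∑ i : ι, (MvPolynomial.X i : MvPolynomial ι ℝ)).IsHomogeneous 1 :=
    MvPolynomial.IsHomogeneous.sum _ _ _ fun i _ => MvPolynomial.isHomogeneous_X _ i
  refine ⟨bernsteinCoeff (homogenizeBy (∑ i, MvPolynomial.X i) n β), fun π hπ => ?_⟩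
  rw [← eval_powerPoly, powerPoly_bernsteinCoeff (isHomogeneous_homogenizeBy hsum n β),
    eval_homogenizeBy hβ (by simpa using hπ)]

lemma exists_pos_isTest_mul_add (n : ℕ) (c : (ι → ℕ) → ℝ) :
    ∃ a > 0, ∃ b, IsTest ι n fun x => a * c x + b := by
  obtain ⟨M, hM, hcM⟩ := ((countVecs ι n).finite_toSet.image c).isBounded.exists_pos_norm_le
  refine ⟨(2 * M)⁻¹, by positivity, 1 / 2, fun x hx => ?_⟩
  obtain ⟨hlower, hupper⟩ := abs_le.mp (hcM (c x) (Set.mem_image_of_mem c hx))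
  have hrescale : (2 * M)⁻¹ * c x + 1 / 2 = (c x + M) / (2 * M) := by field_simp
  simp only [hrescale]
  exact ⟨div_nonneg (by linarith) (by linarith), (div_le_one (by linarith)).mpr (by linarith)⟩

lemma IsSUB.exists_polynomial {P0 : Set (ι → ℝ)} (hcompact : IsCompact P0) (hne : P0.Nonempty)
    {φ : (ι → ℕ) → ℝ} (hφ : IsSUB ι n P0 φ) :
    ∃ β : MvPolynomial ι ℝ, β.totalDegree ≤ n ∧
      ∀ π ∈ probSimplex ι, π ∈ P0 ↔ MvPolynomial.eval π β ≤ 0 := by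
  have hcont : Continuous (powerFn ι n φ) := by
    simpa only [eval_powerPoly] using MvPolynomial.continuous_eval (powerPoly n φ)
  obtain ⟨t, ht⟩ := exists_forall_mem_iff_le_of_forall_lt hcompact hne hcont.continuousOn hφ
  refine ⟨powerPoly n φ - MvPolynomial.C t, ?_, fun π hπ => ?_⟩
  · exact (MvPolynomial.totalDegree_sub_C_le _ _).trans (isHomogeneous_powerPoly φ).totalDegree_le
  · simpa [eval_powerPoly] using ht π hπ

lemma exists_isTest_isSUB_of_polynomial {P0 : Set (ι → ℝ)} (hsub : P0 ⊆ probSimplex ι)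
    {β : MvPolynomial ι ℝ} (hdeg : β.totalDegree ≤ n)
    (hβ : ∀ π ∈ probSimplex ι, π ∈ P0 ↔ MvPolynomial.eval π β ≤ 0) :
    ∃ φ, IsTest ι n φ ∧ IsSUB ι n P0 φ := by
  obtain ⟨c, hc⟩ := exists_powerFn_eq_eval hdeg
  obtain ⟨a, ha, b, htest⟩ := exists_pos_isTest_mul_add n c
  refine ⟨_, htest, fun π₀ hπ₀ πA hπA => ?_⟩
  have hsum₀ : ∑ i, π₀ i = 1 := (hsub hπ₀).2
  have hsumA : ∑ i, πA i = 1 := hπA.1.2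
  have hnonpos : MvPolynomial.eval π₀ β ≤ 0 := (hβ π₀ (hsub hπ₀)).mp hπ₀
  have hpos : 0 < MvPolynomial.eval πA β := not_le.mp fun h => hπA.2 ((hβ πA hπA.1).mpr h)
  rw [powerFn_mul_add c a b hsum₀, powerFn_mul_add c a b hsumA, hc π₀ hsum₀, hc πA hsumA]
  gcongr
  exact hnonpos.trans_lt hpos

end PowerFunction

theorem stmt_4_general (ι : Type) [Fintype ι] [DecidableEq ι] (n : ℕ)
    (P0 : Set (ι → ℝ)) (hclosed : IsClosed P0) (hsub : P0 ⊆ probSimplex ι)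
    (hne : P0.Nonempty) (hneq : P0 ≠ probSimplex ι) :
    (∃ φ, IsTest ι n φ ∧ IsSUB ι n P0 φ) ↔
      ∃ β : MvPolynomial ι ℝ, β.totalDegree ≤ n ∧
        (∃ π ∈ probSimplex ι, ∃ π' ∈ probSimplex ι,
          MvPolynomial.eval π β ≠ MvPolynomial.eval π' β) ∧
        P0 = {π ∈ probSimplex ι | MvPolynomial.eval π β ≤ 0} ∧
        probSimplex ι \ P0 = {π ∈ probSimplex ι | 0 < MvPolynomial.eval π β} := by
  simp only [eq_sep_nonpos_and_sdiff_eq_sep_pos_iff hsub]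
  constructor
  · rintro ⟨φ, -, hφ⟩
    obtain ⟨β, hdeg, hβ⟩ :=
      hφ.exists_polynomial (isCompact_probSimplex.of_isClosed_subset hclosed hsub) hne
    obtain ⟨π₀, hπ₀⟩ := hne
    obtain ⟨πA, hπA, hπA_notMem⟩ := Set.exists_of_ssubset (hsub.ssubset_of_ne hneq)
    refine ⟨β, hdeg, ⟨π₀, hsub hπ₀, πA, hπA, fun heq => hπA_notMem ?_⟩, hβ⟩
    rw [hβ πA hπA, ← heq]
    exact (hβ π₀ (hsub hπ₀)).mp hπ₀
  · rintro ⟨β, hdeg, -, hβ⟩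
    exact exists_isTest_isSUB_of_polynomial hsub hdeg hβ

/-- an SUB test of sample size `n` exists iff there is a polynomial of degree
at most `n`, non-constant on the simplex, whose nonpositivity set cuts out exactly `P0`. -/
theorem stmt_4 (k n : ℕ) (hk : 2 ≤ k) (hn : 1 ≤ n)
    (P0 : Set (Fin k → ℝ)) (hclosed : IsClosed P0) (hsub : P0 ⊆ probSimplex (Fin k))
    (hne : P0.Nonempty) (hneq : P0 ≠ probSimplex (Fin k)) :
    (∃ φ, IsTest (Fin k) n φ ∧ IsSUB (Fin k) n P0 φ) ↔
      ∃ β : MvPolynomial (Fin k) ℝ, β.totalDegree ≤ n ∧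
        (∃ π ∈ probSimplex (Fin k), ∃ π' ∈ probSimplex (Fin k),
          MvPolynomial.eval π β ≠ MvPolynomial.eval π' β) ∧
        P0 = {π ∈ probSimplex (Fin k) | MvPolynomial.eval π β ≤ 0} ∧
        probSimplex (Fin k) \ P0 = {π ∈ probSimplex (Fin k) | 0 < MvPolynomial.eval π β} := by
  exact stmt_4_general (Fin k) n P0 hclosed hsub hne hneq
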